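/- arXiv:1912.02695 — 6 statements merged into one kernel-verified Lean document; each statement's English description precedes it below -/
import Mathlib

section
/- Let 4 ≤ k ≤ n. Let C_{k−2}(n) denote the ℤ/2-vector space of functions from (k−1)-element subsets of {1,…,n} to ℤ/2, and for a subset S ⊆ {1,…,n} with |S| = k let ∂S ∈ C_{k−2}(n) denote the indicator function of the set of (k−1)-element subsets of S (i.e. ∂S = Σ_{s∈S} (S∖{s}) with coefficients in ℤ/2). Then there exists a group homomorphism ψ : Γ_n^k → (C_{k−2}(n), +) with ψ(a_{P,Q}) = ∂(P∪Q) for every generator a_{P,Q}; equivalently, the assignment a_{P,Q} ↦ ∂(P∪Q) sends every defining relator of Γ_n^k (the inverse relations, the far-commutativity relations, and all (k+1)-gon relations) to the zero element of C_{k−2}(n). -/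
/-!
`C_{k-2}(n)` is commutative of exponent two, and `∂(P ∪ Q)` is symmetric in `P` and `Q`, so the
inverse and far-commutativity relators are killed at once. In a `(k+1)`-gon relation with index set
`M = {m_1, …, m_{k+1}}`, the set `M_R(t) ∪ M_L(t)` omits `m_t`, because `y_t` lies neither in
`R_Y(y_t)` nor in `L_Y(y_t)`. As it has `k` elements, it equals `M ∖ {m_t}`; this cardinality
argument replaces an appeal to the antipodality condition on `Y`. The relator therefore maps to
`∑_t ∂(M ∖ {m_t})`, which is `∂∂M = 0`: a `(k-1)`-subset `S` of `M` lies in `M ∖ {m_t}` for exactly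
the two `t` with `m_t ∉ S` (`sum_erase_indicator`), and any other `S` lies in none of them.
-/

/-- Generator indices for the group `Γₙᵏ`: ordered pairs `(P, Q)` of disjoint subsets of
`{1, …, n}` with `|P ∪ Q| = k` and `|P|, |Q| ≥ 2`. -/
abbrev GammaGen (n k : ℕ) : Type :=
  {PQ : Finset (Fin n) × Finset (Fin n) //
    Disjoint PQ.1 PQ.2 ∧ (PQ.1 ∪ PQ.2).card = k ∧ 2 ≤ PQ.1.card ∧ 2 ≤ PQ.2.card}

/-- `L_Y(i)`: the elements `y` of `Y` with `y - i ∈ {1, …, l-1}` modulo `2l`. -/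
def galeL (l : ℕ) (Y : Finset (ZMod (2 * l))) (i : ZMod (2 * l)) : Finset (ZMod (2 * l)) :=
  Y.filter fun y => 1 ≤ (y - i).val ∧ (y - i).val ≤ l - 1

/-- `R_Y(i)`: the elements `y` of `Y` with `y - i ∈ {l+1, …, 2l-1}` modulo `2l`. -/
def galeR (l : ℕ) (Y : Finset (ZMod (2 * l))) (i : ZMod (2 * l)) : Finset (ZMod (2 * l)) :=
  Y.filter fun y => l + 1 ≤ (y - i).val ∧ (y - i).val ≤ 2 * l - 1

/-- A standard Gale diagram of order `l`: a subset `Y` of the vertices `ℤ/2l` of the regular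
`2l`-gon with `|Y| = l`, no two antipodal points in `Y`, and every open half-plane determined
by a diameter contains at least two points of `Y`. -/
def IsStdGale (l : ℕ) (Y : Finset (ZMod (2 * l))) : Prop :=
  Y.card = l ∧
  (∀ j : ZMod (2 * l), ¬(j ∈ Y ∧ j + (l : ZMod (2 * l)) ∈ Y)) ∧
  (∀ j : ZMod (2 * l), 2 ≤ (galeL l Y j).card)

/-- The defining relators of `Γₙᵏ`: the inverse relations `a_{Q,P} a_{P,Q}`, the
far-commutativity relations, and the `(k+1)`-gon relations coming from standard Gale
diagrams of order `k+1`. -/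
def gammaRels (n k : ℕ) : Set (FreeGroup (GammaGen n k)) :=
  {w | (∃ g g' : GammaGen n k, g'.1.1 = g.1.2 ∧ g'.1.2 = g.1.1 ∧
          w = FreeGroup.of g * FreeGroup.of g') ∨
       (∃ g g' : GammaGen n k,
          (g.1.1 ∩ (g'.1.1 ∪ g'.1.2)).card < g.1.1.card ∧
          (g.1.2 ∩ (g'.1.1 ∪ g'.1.2)).card < g.1.2.card ∧
          (g'.1.1 ∩ (g.1.1 ∪ g.1.2)).card < g'.1.1.card ∧
          (g'.1.2 ∩ (g.1.1 ∪ g.1.2)).card < g'.1.2.card ∧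
          w = FreeGroup.of g * FreeGroup.of g' * (FreeGroup.of g)⁻¹ * (FreeGroup.of g')⁻¹) ∨
       (∃ (Y : Finset (ZMod (2 * (k + 1)))) (y : Fin (k + 1) → ZMod (2 * (k + 1)))
          (m : Fin (k + 1) → Fin n) (g : Fin (k + 1) → GammaGen n k),
          IsStdGale (k + 1) Y ∧
          StrictMono (fun t => (y t).val) ∧
          Finset.image y Finset.univ = Y ∧
          Function.Injective m ∧
          (∀ t, (g t).1.1 =
              (Finset.univ.filter fun s => y s ∈ galeR (k + 1) Y (y t)).image m ∧
            (g t).1.2 =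
              (Finset.univ.filter fun s => y s ∈ galeL (k + 1) Y (y t)).image m) ∧
          w = ((List.finRange (k + 1)).map fun t => FreeGroup.of (g t)).prod)}

/-- The group `Γₙᵏ`. -/
abbrev Gamma (n k : ℕ) : Type := PresentedGroup (gammaRels n k)

/-- The generator `a_{P,Q}` of `Γₙᵏ`. -/
def gammaOf {n k : ℕ} (g : GammaGen n k) : Gamma n k := PresentedGroup.of g

/-- The identity `∂∂ = 0` for a `k`-simplex with coefficients in `ℤ/2`, evaluated at a
`(k-1)`-element set `S`. The vertices of the simplex are listed by `m`. -/
lemma sum_erase_indicator {n k : ℕ} (hk : 1 ≤ k) (m : Fin (k + 1) → Fin n)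
    (hm : Function.Injective m) (S : Finset (Fin n)) (hS : S.card = k - 1) :
    ∑ t, (if S ⊆ (Finset.univ.erase t).image m then (1 : ZMod 2) else 0) = 0 := by
  have key : ∀ t, S ⊆ (Finset.univ.erase t).image m ↔ S ⊆ Finset.univ.image m ∧ m t ∉ S := by
    intro t
    rw [Finset.image_erase hm, Finset.subset_erase]
  simp only [key]
  by_cases h : S ⊆ Finset.univ.image m
  · have h1 : (Finset.univ.filter fun t => m t ∈ S).card = k - 1 := by
      rw [← hS, ← Finset.card_image_of_injective _ hm]
      congr 1
      ext x
      simp only [Finset.mem_image, Finset.mem_filter, Finset.mem_univ, true_and]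
      constructor
      · rintro ⟨t, ht, rfl⟩
        exact ht
      · intro hx
        obtain ⟨t, -, rfl⟩ := Finset.mem_image.1 (h hx)
        exact ⟨t, hx, rfl⟩
    have h2 := Finset.card_filter_add_card_filter_not
      (s := (Finset.univ : Finset (Fin (k + 1)))) (fun t => m t ∈ S)
    rw [h1, Finset.card_univ, Fintype.card_fin] at h2
    have h3 : (Finset.univ.filter fun t => m t ∉ S).card = 2 := by omega
    simp only [h, true_and, Finset.sum_boole, h3]
    rfl
  · simp [h]

/-- In a polygon relation the index set of the `t`-th factor is the set of all labels
except `m t`. -/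
lemma gon_union_eq {n k : ℕ} (Y : Finset (ZMod (2 * (k + 1))))
    (y : Fin (k + 1) → ZMod (2 * (k + 1))) (m : Fin (k + 1) → Fin n)
    (hm : Function.Injective m) (t : Fin (k + 1)) (g : GammaGen n k)
    (hR : g.1.1 = (Finset.univ.filter fun s => y s ∈ galeR (k + 1) Y (y t)).image m)
    (hL : g.1.2 = (Finset.univ.filter fun s => y s ∈ galeL (k + 1) Y (y t)).image m) :
    g.1.1 ∪ g.1.2 = (Finset.univ.erase t).image m := by
  apply Finset.eq_of_subset_of_card_le
  · rw [hR, hL, ← Finset.image_union]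
    apply Finset.image_subset_image
    intro s hs
    rw [Finset.mem_erase]
    refine ⟨?_, Finset.mem_univ _⟩
    rintro rfl
    simp [galeR, galeL] at hs
  · rw [g.2.2.1, Finset.card_image_of_injective _ hm, Finset.card_erase_of_mem (Finset.mem_univ _)]
    simp

/-- there is a group homomorphism `ψ : Γₙᵏ → C_{k-2}(n)` (the ℤ/2-vector space
of functions from `(k-1)`-element subsets of `{1, …, n}` to `ℤ/2`, written multiplicatively)
sending each generator `a_{P,Q}` to `∂(P ∪ Q)`, the indicator function of the set of
`(k-1)`-element subsets of `P ∪ Q`. -/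
theorem gamma_boundary_hom (n k : ℕ) (hk : 4 ≤ k) (hkn : k ≤ n) :
    ∃ ψ : Gamma n k →* Multiplicative ({S : Finset (Fin n) // S.card = k - 1} → ZMod 2),
      ∀ g : GammaGen n k,
        ψ (gammaOf g) =
          Multiplicative.ofAdd
            (fun S : {S : Finset (Fin n) // S.card = k - 1} =>
              if S.1 ⊆ g.1.1 ∪ g.1.2 then 1 else 0) := by
  let F : GammaGen n k → ({S : Finset (Fin n) // S.card = k - 1} → ZMod 2) :=
    fun g S => if S.1 ⊆ g.1.1 ∪ g.1.2 then 1 else 0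
  have hrel : ∀ r ∈ gammaRels n k,
      FreeGroup.lift (fun g => Multiplicative.ofAdd (F g)) r = 1 := by
    rintro r (⟨g, g', h1, h2, rfl⟩ | ⟨g, g', -, -, -, -, rfl⟩ | ⟨Y, y, m, g, -, -, -, hm, hg, rfl⟩)
    · have hF : F g' = F g := by
        funext S
        simp only [F, h1, h2, Finset.union_comm]
      rw [map_mul, FreeGroup.lift_apply_of, FreeGroup.lift_apply_of, hF, ← ofAdd_add,
        ofAdd_eq_one]
      funext S
      exact CharTwo.add_self_eq_zero _
    · simp only [map_mul, map_inv]
      rw [mul_inv_cancel_comm, mul_inv_cancel]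
    · rw [map_list_prod, List.map_map, ← List.ofFn_eq_map, List.prod_ofFn]
      simp only [Function.comp_apply, FreeGroup.lift_apply_of]
      rw [← ofAdd_sum, ofAdd_eq_one]
      funext S
      rw [Finset.sum_apply]
      simp only [F, fun t => gon_union_eq Y y m hm t (g t) (hg t).1 (hg t).2]
      exact sum_erase_indicator (by omega) m hm S.1 S.2
  exact ⟨PresentedGroup.toGroup hrel, fun g => PresentedGroup.toGroup.of hrel⟩
end

section
/- Let 4 ≤ k ≤ n. In the group Γ_n^k: (a) every generator a_{P,Q} is different from the identity element; (b) if (P,Q) and (P',Q') are two generator indices with P ∪ Q ≠ P' ∪ Q', then a_{P,Q} ≠ a_{P',Q'} in Γ_n^k. -/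
/-- The support indicator in `ℤ/2`, written multiplicatively: nontrivial on `a_{P,Q}` exactly when
`A ⊆ P ∪ Q`. -/
def supportParity {n k : ℕ} (A : Finset (Fin n)) (g : GammaGen n k) : Multiplicative (ZMod 2) :=
  Multiplicative.ofAdd (if A ⊆ g.1.1 ∪ g.1.2 then 1 else 0)

theorem mul_self_zmod_two (x : Multiplicative (ZMod 2)) : x * x = 1 := by
  revert x; decide

/-- A `(k-1)`-set is contained in `0` or `2` of the `k`-subsets of a `(k+1)`-set, the latter being
enumerated as the complements of the points `m t`. -/
theorem even_card_facets {n k : ℕ} (hk : 1 ≤ k) (A : Finset (Fin n)) (hA : A.card = k - 1)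
    (m : Fin (k + 1) → Fin n) (hm : Function.Injective m) :
    Even (Finset.univ.filter fun t => A ⊆ (Finset.univ.erase t).image m).card := by
  by_cases hAT : A ⊆ Finset.univ.image m
  · have h1 : (Finset.univ.filter fun t => A ⊆ (Finset.univ.erase t).image m)
        = Finset.univ.filter fun t => ¬ m t ∈ A := by
      ext t
      simp only [Finset.mem_filter, Finset.mem_univ, true_and]
      constructor
      · intro h hmem
        obtain ⟨s, hs, hst⟩ := Finset.mem_image.1 (h hmem)
        exact (Finset.mem_erase.1 hs).1 (hm hst)
      · intro h a ha
        obtain ⟨s, -, rfl⟩ := Finset.mem_image.1 (hAT ha)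
        refine Finset.mem_image_of_mem m (Finset.mem_erase.2 ⟨?_, Finset.mem_univ s⟩)
        rintro rfl
        exact h ha
    have h2 : (Finset.univ.filter fun t => m t ∈ A).card = k - 1 := by
      rw [← hA, ← Finset.card_image_of_injective _ hm]
      congr 1
      ext a
      simp only [Finset.mem_image, Finset.mem_filter, Finset.mem_univ, true_and]
      constructor
      · rintro ⟨t, ht, rfl⟩
        exact ht
      · intro ha
        obtain ⟨s, -, rfl⟩ := Finset.mem_image.1 (hAT ha)
        exact ⟨s, ha, rfl⟩
    have h3 := Finset.card_filter_add_card_filter_not (s := (Finset.univ : Finset (Fin (k + 1))))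
      (fun t => m t ∈ A)
    rw [h2, Finset.card_univ, Fintype.card_fin] at h3
    rw [h1]
    exact ⟨1, by omega⟩
  · rw [Finset.filter_false_of_mem]
    · simp
    · intro t _ h
      exact hAT (h.trans (Finset.image_subset_image (Finset.erase_subset _ _)))

theorem supportParity_rels {n k : ℕ} (hk : 1 ≤ k) (A : Finset (Fin n)) (hA : A.card = k - 1) :
    ∀ w ∈ gammaRels n k, FreeGroup.lift (supportParity (k := k) A) w = 1 := by
  rintro w (⟨g, g', h1, h2, rfl⟩ | ⟨g, g', -, -, -, -, rfl⟩ | ⟨Y, y, m, g, -, -, -, hm, hg, rfl⟩)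
  · have h : supportParity A g' = supportParity A g := by
      rw [supportParity, supportParity, h1, h2, Finset.union_comm]
    simp [h, mul_self_zmod_two]
  · simp
  · -- The support of the `t`-th letter avoids `m t`, and has the size of the whole complement.
    have hsupp : ∀ t, (g t).1.1 ∪ (g t).1.2 = (Finset.univ.erase t).image m := by
      intro t
      apply Finset.eq_of_subset_of_card_le
      · rw [(hg t).1, (hg t).2, ← Finset.image_union]
        apply Finset.image_subset_image
        intro s hs
        refine Finset.mem_erase.2 ⟨?_, Finset.mem_univ s⟩
        rintro rfl
        simp [galeR, galeL] at hs
      · rw [(g t).2.2.1, Finset.card_image_of_injective _ hm]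
        simp
    rw [map_list_prod, List.map_map, ← Fin.prod_univ_def]
    simp only [Function.comp_apply, FreeGroup.lift_apply_of, supportParity, hsupp]
    rw [← ofAdd_sum, Finset.sum_boole,
      (ZMod.natCast_eq_zero_iff_even).2 (even_card_facets hk A hA m hm), ofAdd_zero]

/-- The homomorphism `Γₙᵏ → ℤ/2` attached to a `(k-1)`-set `A`. -/
def gammaParity {n k : ℕ} (hk : 1 ≤ k) (A : Finset (Fin n)) (hA : A.card = k - 1) :
    Gamma n k →* Multiplicative (ZMod 2) :=
  PresentedGroup.toGroup (supportParity_rels hk A hA)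

theorem gammaParity_of {n k : ℕ} (hk : 1 ≤ k) (A : Finset (Fin n)) (hA : A.card = k - 1)
    (g : GammaGen n k) :
    gammaParity hk A hA (gammaOf g)
      = Multiplicative.ofAdd (if A ⊆ g.1.1 ∪ g.1.2 then 1 else 0) :=
  PresentedGroup.toGroup.of (supportParity_rels hk A hA)

/-- in `Γₙᵏ` (for `4 ≤ k ≤ n`), (a) every generator `a_{P,Q}` is different from
the identity, and (b) generators `a_{P,Q}`, `a_{P',Q'}` with `P ∪ Q ≠ P' ∪ Q'` are distinct. -/
theorem gamma_generators_nontrivial (n k : ℕ) (hk : 4 ≤ k) (hkn : k ≤ n) :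
    (∀ g : GammaGen n k, gammaOf g ≠ 1) ∧
    (∀ g g' : GammaGen n k, g.1.1 ∪ g.1.2 ≠ g'.1.1 ∪ g'.1.2 → gammaOf g ≠ gammaOf g') := by
  have hk1 : 1 ≤ k := by omega
  refine ⟨fun g hg => ?_, fun g g' hne hg => ?_⟩
  · obtain ⟨A, hAs, hA⟩ := Finset.exists_subset_card_eq
      (show k - 1 ≤ (g.1.1 ∪ g.1.2).card by rw [g.2.2.1]; omega)
    have h := gammaParity_of hk1 A hA g
    rw [hg, map_one, if_pos hAs] at h
    exact absurd h (by decide)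
  · -- The supports have equal size, so distinctness gives a point of the first outside the second.
    have hx : ¬ g.1.1 ∪ g.1.2 ⊆ g'.1.1 ∪ g'.1.2 := fun hsub =>
      hne (Finset.eq_of_subset_of_card_le hsub (by rw [g.2.2.1, g'.2.2.1]))
    obtain ⟨x, hxg, hxg'⟩ := Finset.not_subset.1 hx
    obtain ⟨A, hxA, hAs, hA⟩ := Finset.exists_subsuperset_card_eq
      (Finset.singleton_subset_iff.2 hxg)
      (show ({x} : Finset (Fin n)).card ≤ k - 1 by rw [Finset.card_singleton]; omega)
      (show k - 1 ≤ (g.1.1 ∪ g.1.2).card by rw [g.2.2.1]; omega)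
    have h := gammaParity_of hk1 A hA g
    rw [hg, gammaParity_of, if_pos hAs,
      if_neg fun hsub => hxg' (hsub (Finset.singleton_subset_iff.1 hxA))] at h
    exact absurd h (by decide)
end

section
/- Consider the action on subsets of ℤ/2l of the dihedral group of order 4l generated by the rotation j ↦ j+1 and the reflection j ↦ −j of ℤ/2l. The number of orbits of standard Gale diagrams of order l under this action (i.e. the number of standard Gale diagrams up to isometries of the plane) equals 1 for l = 5, equals 2 for l = 6, and equals 5 for l = 7. -/
/-- Two subsets of `ℤ/2l` are related by the dihedral group of order `4l` generated by the
rotation `j ↦ j + 1` and the reflection `j ↦ -j`: every element of this group has the form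
`j ↦ j + a` or `j ↦ a - j` for some `a : ℤ/2l`. -/
def galeEquiv (l : ℕ) (Y Y' : Finset (ZMod (2 * l))) : Prop :=
  ∃ a : ZMod (2 * l), Y' = Y.image (fun j => j + a) ∨ Y' = Y.image (fun j => a - j)

/-- The indicator function of the subset of `ℤ/2l` containing exactly one point of each antipodal
pair which is encoded by `n`: for `j < l` it contains `j` if the `j`-th binary digit of `n` is `1`,
and `j + l` if that digit is `0`. -/
def pat (l n : ℕ) (y : ZMod (2 * l)) : Bool :=
  if y.val < l then n.testBit y.val else !n.testBit (y.val - l)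

/-- The subset of `ℤ/2l` with indicator function `pat l n`. -/
def half (l n : ℕ) [NeZero l] : Finset (ZMod (2 * l)) :=
  Finset.univ.filter fun y => pat l n y = true

lemma mem_half {l n : ℕ} [NeZero l] {y : ZMod (2 * l)} : y ∈ half l n ↔ pat l n y = true := by
  simp [half]

lemma galeEquiv_iff {l : ℕ} {Y Y' : Finset (ZMod (2 * l))} :
    galeEquiv l Y Y' ↔
      ∃ a, (∀ y, y + a ∈ Y' ↔ y ∈ Y) ∨ (∀ y, a - y ∈ Y' ↔ y ∈ Y) := by
  unfold galeEquiv
  refine exists_congr fun a => or_congr ⟨?_, fun h => ?_⟩ ⟨?_, fun h => ?_⟩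
  · rintro rfl y
    simp
  · ext y
    have := h (y - a)
    simp only [sub_add_cancel] at this
    simp [this, sub_eq_add_neg]
  · rintro rfl y
    simp
  · ext y
    have := h (a - y)
    simp only [sub_sub_cancel] at this
    rw [this, Finset.mem_image]
    constructor
    · intro hy
      exact ⟨_, hy, sub_sub_cancel _ _⟩
    · rintro ⟨z, hz, rfl⟩
      simpa using hz

lemma galeEquiv_equivalence (l : ℕ) : Equivalence (galeEquiv l) where
  refl Y := galeEquiv_iff.2 ⟨0, Or.inl fun y => by simp⟩
  symm {Y Y'} h := by
    rw [galeEquiv_iff] at h ⊢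
    obtain ⟨a, h | h⟩ := h
    · exact ⟨-a, Or.inl fun y => by rw [← h]; simp⟩
    · exact ⟨a, Or.inr fun y => by rw [← h]; simp⟩
  trans {Y Y' Y''} h h' := by
    rw [galeEquiv_iff] at h h' ⊢
    obtain ⟨a, h | h⟩ := h <;> obtain ⟨b, h' | h'⟩ := h'
    · exact ⟨a + b, Or.inl fun y => by rw [← h, ← h', add_assoc]⟩
    · exact ⟨b - a, Or.inr fun y => by rw [← h, ← h']; congr! 1; ring⟩
    · exact ⟨a + b, Or.inr fun y => by rw [← h, ← h']; congr! 1; ring⟩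
    · exact ⟨b - a, Or.inl fun y => by rw [← h, ← h']; congr! 1; ring⟩

lemma l_add_l (l : ℕ) : (l : ZMod (2 * l)) + l = 0 := by
  have := ZMod.natCast_self (2 * l)
  push_cast at this
  rw [← this]; ring

/-- A standard Gale diagram contains exactly one point of each antipodal pair: `Y` and its
antipodal image are disjoint and have `2l` elements together, so they exhaust `ℤ/2l`. -/
lemma antipode_mem {l : ℕ} [NeZero l] {Y : Finset (ZMod (2 * l))} (hY : IsStdGale l Y)
    (j : ZMod (2 * l)) : j + (l : ZMod (2 * l)) ∈ Y ↔ j ∉ Y := by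
  obtain ⟨hc, ha, -⟩ := hY
  refine ⟨fun h h' => ha j ⟨h', h⟩, fun h => ?_⟩
  have hd : Disjoint Y (Y.image (· + (l : ZMod (2 * l)))) := by
    rw [Finset.disjoint_left]
    intro x hx hx'
    obtain ⟨z, hz, rfl⟩ := Finset.mem_image.1 hx'
    exact ha z ⟨hz, hx⟩
  have hu : Y ∪ Y.image (· + (l : ZMod (2 * l))) = Finset.univ := by
    rw [← Finset.card_eq_iff_eq_univ, Finset.card_union_of_disjoint hd,
      Finset.card_image_of_injective _ (add_left_injective _), hc, ZMod.card]
    ring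
  have hj := Finset.mem_univ j
  rw [← hu, Finset.mem_union, Finset.mem_image] at hj
  obtain hj | ⟨z, hz, rfl⟩ := hj
  · exact absurd hj h
  · simpa [add_assoc, l_add_l] using hz

lemma exists_code {l : ℕ} [NeZero l] {Y : Finset (ZMod (2 * l))} (hY : IsStdGale l Y) :
    ∃ n < 2 ^ l, Y = half l n := by
  refine ⟨Nat.ofBits fun i : Fin l => decide (((i : ℕ) : ZMod (2 * l)) ∈ Y),
    Nat.ofBits_lt_two_pow _, ?_⟩
  ext y
  have hl : y.val < 2 * l := ZMod.val_lt y
  rw [mem_half, pat]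
  split_ifs with h
  · simp [Nat.testBit_ofBits_lt _ _ h]
  · have h' : y.val - l < l := by omega
    have hy : ((y.val - l : ℕ) : ZMod (2 * l)) + l = y := by
      rw [← Nat.cast_add, Nat.sub_add_cancel (not_lt.1 h)]
      simp
    have := antipode_mem hY ((y.val - l : ℕ) : ZMod (2 * l))
    rw [hy] at this
    rw [Nat.testBit_ofBits_lt _ _ h', this]
    simp

/-- Two encoded sets are equivalent, expressed through their indicator functions so that it can be
evaluated efficiently. -/
def PatEquiv (l m n : ℕ) : Prop :=
  ∃ a : ZMod (2 * l), (∀ y, pat l n (y + a) = pat l m y) ∨ (∀ y, pat l n (a - y) = pat l m y)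

instance (l m n : ℕ) [NeZero l] : Decidable (PatEquiv l m n) := by
  unfold PatEquiv; infer_instance

instance (l : ℕ) [NeZero l] (Y : Finset (ZMod (2 * l))) : Decidable (IsStdGale l Y) := by
  unfold IsStdGale; infer_instance

lemma galeEquiv_half {l m n : ℕ} [NeZero l] :
    galeEquiv l (half l m) (half l n) ↔ PatEquiv l m n := by
  simp only [galeEquiv_iff, PatEquiv, mem_half, ← Bool.eq_iff_iff]

/-- Counting orbits through a complete system `r` of codes of representatives. The conditions on
`|Y|` and on antipodal points are not needed as hypotheses in `hs`, being automatic for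
`half l n`. -/
lemma card_orbits (l k : ℕ) [NeZero l] (r : Fin k → ℕ)
    (hr : ∀ i, IsStdGale l (half l (r i)))
    (hi : ∀ i j, PatEquiv l (r i) (r j) → i = j)
    (hs : ∀ n < 2 ^ l, (∀ j, 2 ≤ (galeL l (half l n) j).card) → ∃ i, PatEquiv l (r i) n) :
    Nat.card (Quot fun Y Y' : {Y : Finset (ZMod (2 * l)) // IsStdGale l Y} =>
      galeEquiv l Y.1 Y'.1) = k := by
  let f : Fin k → Quot fun Y Y' : {Y : Finset (ZMod (2 * l)) // IsStdGale l Y} =>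
      galeEquiv l Y.1 Y'.1 := fun i => Quot.mk _ ⟨half l (r i), hr i⟩
  have he : Equivalence fun Y Y' : {Y : Finset (ZMod (2 * l)) // IsStdGale l Y} =>
      galeEquiv l Y.1 Y'.1 := (galeEquiv_equivalence l).comap Subtype.val
  have hf : Function.Bijective f := by
    constructor
    · intro i j hij
      have := (he.quot_mk_eq_iff _ _).1 hij
      exact hi i j (galeEquiv_half.1 this)
    · rintro ⟨Y, hY⟩
      obtain ⟨n, hn, rfl⟩ := exists_code hY
      obtain ⟨i, h⟩ := hs n hn hY.2.2
      exact ⟨i, Quot.sound (galeEquiv_half.2 h)⟩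
  rw [← Nat.card_eq_of_bijective f hf, Nat.card_fin]

/-- the number of standard Gale diagrams of order `l` up to the dihedral action
(i.e. up to isometries of the plane) is `1` for `l = 5`, `2` for `l = 6` and `5` for `l = 7`. -/
theorem stdGale_count :
    Nat.card (Quot fun Y Y' : {Y : Finset (ZMod (2 * 5)) // IsStdGale 5 Y} =>
      galeEquiv 5 Y.1 Y'.1) = 1 ∧
    Nat.card (Quot fun Y Y' : {Y : Finset (ZMod (2 * 6)) // IsStdGale 6 Y} =>
      galeEquiv 6 Y.1 Y'.1) = 2 ∧
    Nat.card (Quot fun Y Y' : {Y : Finset (ZMod (2 * 7)) // IsStdGale 7 Y} =>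
      galeEquiv 7 Y.1 Y'.1) = 5 := by
  refine ⟨card_orbits 5 1 ![10] ?_ ?_ ?_, card_orbits 6 2 ![10, 12] ?_ ?_ ?_,
    card_orbits 7 5 ![10, 12, 18, 20, 42] ?_ ?_ ?_⟩
  all_goals decide +kernel
end

section
/- Let n ≥ d + 2 and n ≥ d' + 2. Let x_1, …, x_n ∈ ℝ^d and x'_1, …, x'_n ∈ ℝ^{d'} be two tuples of pairwise distinct points, each affinely spanning its ambient space, and such that each x_i is a vertex of P = conv{x_1,…,x_n} and each x'_i is a vertex of P' = conv{x'_1,…,x'_n} (i.e. no point lies in the convex hull of the others). Let (y_1,…,y_n) and (y'_1,…,y'_n) be Gale transforms of the two tuples. Then the following are equivalent: (A) there exists a permutation σ of {1,…,n} such that for every J ⊆ {1,…,n}, J defines a face of P if and only if σ(J) defines a face of P' (i.e. P and P' are combinatorially equivalent); (B) there exists a permutation σ of {1,…,n} such that for every J ⊆ {1,…,n}, 0 ∈ relint{y_j : j ∈ J} if and only if 0 ∈ relint{y'_j : j ∈ σ(J)} (i.e. the Gale diagrams are equivalent). -/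
/-!
Write `D ⊆ ℝⁿ` for the space of affine dependences of `x` and `A ⊆ ℝⁿ` for the space of value
vectors `(g (x i))ᵢ` of affine functions `g` on `ℝᵈ`.  By definition `D = Aᗮ`, and the Gale
transform property says that `D` is also the space of value vectors `(⟨u, y i⟩)ᵢ`.  Hence
`∑ i, lam i • y i = 0` iff `lam ∈ Dᗮ = Aᗮᗮ = A` (`gale_sum_eq_zero_iff`).

A set `J` defines a face iff some member of `A` vanishes on `J` and is positive off `J`, so by the
above, for `J` not the full index set, `J` defines a face iff `0 ∈ relint {y j : j ∉ J}`.  For the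
full index set the former always holds and the latter never does (`zero_mem_relintTuple_iff`).
Face families and Gale diagrams therefore determine each other by complementation, which commutes
with permutations of the indices: the same `σ` works for both sides of the equivalence.
-/

/-- `y : Fin n → ℝ^(n-d-1)` is a Gale transform of `x : Fin n → ℝ^d` if for every
`c ∈ ℝ^n`, `c` is an affine dependence of `x` (`∑ c i = 0` and `∑ c i • x i = 0`) iff
there is `u ∈ ℝ^(n-d-1)` with `c i = ⟨u, y i⟩` for all `i`. -/
def IsGaleTransform (d n : ℕ) (x : Fin n → Fin d → ℝ)
    (y : Fin n → Fin (n - d - 1) → ℝ) : Prop :=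
  ∀ c : Fin n → ℝ,
    ((∑ i, c i = 0 ∧ ∑ i, c i • x i = 0) ↔
      ∃ u : Fin (n - d - 1) → ℝ, ∀ i, c i = ∑ j, u j * y i j)

/-- `J` defines a face of the polytope `conv {x 1, …, x n}`: some linear functional equals a
constant `c` on the `x i`, `i ∈ J`, and is `< c` at all other points. -/
def DefinesFace (d n : ℕ) (x : Fin n → Fin d → ℝ) (J : Finset (Fin n)) : Prop :=
  ∃ (f : (Fin d → ℝ) →ₗ[ℝ] ℝ) (c : ℝ), (∀ i ∈ J, f (x i) = c) ∧ ∀ j ∉ J, f (x j) < c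

/-- The relative interior of the tuple `{y j : j ∈ J}`: all strictly positive convex
combinations `∑_{j ∈ J} λ_j • y j` (empty for `J = ∅`). -/
def relintTuple {m n : ℕ} (y : Fin n → Fin m → ℝ) (J : Finset (Fin n)) :
    Set (Fin m → ℝ) :=
  {z | ∃ lam : Fin n → ℝ, (∀ j ∈ J, 0 < lam j) ∧ (∑ j ∈ J, lam j = 1) ∧
    ∑ j ∈ J, lam j • y j = z}


/-- Linear dependences of a Gale transform of `x` are exactly the value vectors on `x` of affine
functions, written as `c - f`. -/
theorem gale_sum_eq_zero_iff {d n : ℕ} {x : Fin n → Fin d → ℝ}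
    {y : Fin n → Fin (n - d - 1) → ℝ} (hy : IsGaleTransform d n x y) (lam : Fin n → ℝ) :
    ∑ i, lam i • y i = 0 ↔
      ∃ (f : (Fin d → ℝ) →ₗ[ℝ] ℝ) (c : ℝ), ∀ i, lam i = c - f (x i) := by
  constructor
  · intro h
    -- `L` has the affine dependences of `x` as its kernel, and pairing with `lam` kills them,
    -- so this pairing factors through `L`.
    let L : (Fin n → ℝ) →ₗ[ℝ] ℝ × (Fin d → ℝ) :=
      (Fintype.linearCombination ℝ (fun _ : Fin n => (1 : ℝ))).prod
        (Fintype.linearCombination ℝ x)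
    let φ : Module.Dual ℝ (Fin n → ℝ) := Fintype.linearCombination ℝ lam
    have hφ : φ ∈ (LinearMap.ker L).dualAnnihilator := by
      rw [Submodule.mem_dualAnnihilator]
      intro w hw
      have hw' : ∑ i, w i = 0 ∧ ∑ i, w i • x i = 0 := by
        simpa [L, Fintype.linearCombination_apply] using hw
      obtain ⟨u, hu⟩ := (hy w).1 hw'
      have hcoord : ∀ j, ∑ i, lam i * y i j = 0 := fun j => by
        simpa [Finset.sum_apply] using congrFun h j
      calc φ w = ∑ i, w i * lam i := by simp [φ, Fintype.linearCombination_apply]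
        _ = ∑ i, ∑ j, u j * (lam i * y i j) := by
            refine Finset.sum_congr rfl fun i _ => ?_
            rw [hu i, Finset.sum_mul]
            exact Finset.sum_congr rfl fun j _ => by ring
        _ = 0 := by
            rw [Finset.sum_comm]
            simp [← Finset.mul_sum, hcoord]
    rw [← LinearMap.range_dualMap_eq_dualAnnihilator_ker] at hφ
    obtain ⟨ψ, hψ⟩ := hφ
    refine ⟨-(ψ ∘ₗ LinearMap.inr ℝ ℝ (Fin d → ℝ)), ψ (1, 0), fun i => ?_⟩
    have h1 := LinearMap.congr_fun hψ (Pi.single i 1)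
    have h2 : ψ (1, x i) = lam i := by
      simpa [L, φ, LinearMap.dualMap_apply] using h1
    have h3 : ((1 : ℝ), x i) = (1, 0) + (0, x i) := by simp
    rw [← h2, h3, map_add]
    simp
  · rintro ⟨f, c, h⟩
    ext j
    -- The `j`-th coordinates of the `y i` form an affine dependence of `x`, as seen by pairing
    -- with the `j`-th unit vector.
    obtain ⟨h0, h1⟩ := (hy fun i => y i j).2 ⟨Pi.single j 1, fun i => by simp [Pi.single_apply]⟩
    have h2 := congrArg f h1
    simp only [map_sum, map_smul, smul_eq_mul, map_zero] at h2
    simp only [Finset.sum_apply, Pi.smul_apply, smul_eq_mul, Pi.zero_apply, h]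
    calc ∑ i, (c - f (x i)) * y i j = c * ∑ i, y i j - ∑ i, y i j * f (x i) := by
          rw [Finset.mul_sum, ← Finset.sum_sub_distrib]
          exact Finset.sum_congr rfl fun i _ => by ring
      _ = 0 := by rw [h0, h2]; ring

theorem zero_mem_relintTuple_iff {d n : ℕ} {x : Fin n → Fin d → ℝ}
    {y : Fin n → Fin (n - d - 1) → ℝ} (hy : IsGaleTransform d n x y) (J : Finset (Fin n)) :
    (0 : Fin (n - d - 1) → ℝ) ∈ relintTuple y J ↔ J.Nonempty ∧ DefinesFace d n x Jᶜ := by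
  constructor
  · rintro ⟨lam, hpos, hsum, h⟩
    refine ⟨Finset.nonempty_of_sum_ne_zero (hsum ▸ one_ne_zero), ?_⟩
    obtain ⟨f, c, hfc⟩ := (gale_sum_eq_zero_iff hy fun i => if i ∈ J then lam i else 0).1 (by
      simpa [ite_smul, Finset.sum_ite_mem] using h)
    refine ⟨f, c, fun i hi => ?_, fun i hi => ?_⟩
    · have := hfc i
      rw [if_neg (Finset.mem_compl.1 hi)] at this
      linarith
    · have hi' : i ∈ J := by simpa using hi
      have := hfc i
      rw [if_pos hi'] at this
      linarith [hpos i hi']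
  · rintro ⟨hJ, f, c, heq, hlt⟩
    have hpos : ∀ i ∈ J, 0 < c - f (x i) := fun i hi => sub_pos.2 (hlt i (by simpa using hi))
    have hS : 0 < ∑ i ∈ J, (c - f (x i)) := Finset.sum_pos hpos hJ
    have hzero : ∑ i ∈ J, (c - f (x i)) • y i = 0 := by
      rw [← (gale_sum_eq_zero_iff hy fun i => c - f (x i)).2 ⟨f, c, fun _ => rfl⟩]
      refine Finset.sum_subset (Finset.subset_univ J) fun i _ hi => ?_
      rw [heq i (Finset.mem_compl.2 hi), sub_self, zero_smul]
    refine ⟨fun i => (∑ i ∈ J, (c - f (x i)))⁻¹ * (c - f (x i)),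
      fun i hi => mul_pos (inv_pos.2 hS) (hpos i hi), ?_, ?_⟩
    · rw [← Finset.mul_sum, inv_mul_cancel₀ hS.ne']
    · simp_rw [mul_smul]
      rw [← Finset.smul_sum, hzero, smul_zero]

theorem definesFace_univ (d n : ℕ) (x : Fin n → Fin d → ℝ) :
    DefinesFace d n x Finset.univ :=
  ⟨0, 0, by simp, by simp⟩

theorem definesFace_iff {d n : ℕ} {x : Fin n → Fin d → ℝ}
    {y : Fin n → Fin (n - d - 1) → ℝ} (hy : IsGaleTransform d n x y) (J : Finset (Fin n)) :
    DefinesFace d n x J ↔ Jᶜ = ∅ ∨ (0 : Fin (n - d - 1) → ℝ) ∈ relintTuple y Jᶜ := by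
  rw [zero_mem_relintTuple_iff hy, compl_compl]
  rcases Jᶜ.eq_empty_or_nonempty with h | h
  · have hJ : J = Finset.univ := by simpa using h
    simp [hJ, definesFace_univ]
  · simp [h, h.ne_empty]

/-- two vertex sets (with Gale transforms `y`, `y'`) give combinatorially
equivalent polytopes iff their Gale diagrams are equivalent: there is a permutation `σ` of
the indices such that `J` defines a face of `P` iff `σ(J)` defines a face of `P'`, iff there
is a permutation `σ` with `0 ∈ relint {y j : j ∈ J}` iff `0 ∈ relint {y' j : j ∈ σ(J)}` for
all `J`. -/
theorem gale_combinatorial_equivalence (d d' n : ℕ) (hn : d + 2 ≤ n) (hn' : d' + 2 ≤ n)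
    (x : Fin n → Fin d → ℝ) (x' : Fin n → Fin d' → ℝ)
    (hinj : Function.Injective x) (hinj' : Function.Injective x')
    (hspan : affineSpan ℝ (Set.range x) = ⊤) (hspan' : affineSpan ℝ (Set.range x') = ⊤)
    (hvert : ∀ i, x i ∉ convexHull ℝ (x '' {j | j ≠ i}))
    (hvert' : ∀ i, x' i ∉ convexHull ℝ (x' '' {j | j ≠ i}))
    (y : Fin n → Fin (n - d - 1) → ℝ) (hy : IsGaleTransform d n x y)
    (y' : Fin n → Fin (n - d' - 1) → ℝ) (hy' : IsGaleTransform d' n x' y') :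
    (∃ σ : Equiv.Perm (Fin n), ∀ J : Finset (Fin n),
        DefinesFace d n x J ↔ DefinesFace d' n x' (J.image σ)) ↔
    (∃ σ : Equiv.Perm (Fin n), ∀ J : Finset (Fin n),
        (0 : Fin (n - d - 1) → ℝ) ∈ relintTuple y J ↔
        (0 : Fin (n - d' - 1) → ℝ) ∈ relintTuple y' (J.image σ)) := by
  have hcompl (σ : Equiv.Perm (Fin n)) (J : Finset (Fin n)) :
      (J.image σ)ᶜ = Jᶜ.image σ := by
    ext i
    simp [← Equiv.eq_symm_apply]
  constructor
  · rintro ⟨σ, h⟩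
    refine ⟨σ, fun J => ?_⟩
    rw [zero_mem_relintTuple_iff hy, zero_mem_relintTuple_iff hy', hcompl, h, Finset.image_nonempty]
  · rintro ⟨σ, h⟩
    refine ⟨σ, fun J => ?_⟩
    rw [definesFace_iff hy, definesFace_iff hy', hcompl, h, Finset.image_eq_empty]
end

section
/- Let d ≥ 1 and n ≥ d + 2. Let ȳ_1, …, ȳ_n be vectors in ℝ^{n−d−1} such that each ȳ_i either has norm 1 or is the zero vector, the vectors ȳ_1, …, ȳ_n linearly span ℝ^{n−d−1}, and 0 lies in the topological interior of conv{ȳ_1,…,ȳ_n}. Then there exist points x_1, …, x_n ∈ ℝ^d whose affine hull is all of ℝ^d, a Gale transform (y_1,…,y_n) of (x_1,…,x_n), and positive reals t_1, …, t_n > 0, such that y_i = t_i ȳ_i for all i (so that ȳ_1,…,ȳ_n is a Gale diagram of x_1,…,x_n). -/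
theorem exists_pos_sum_smul_eq_zero {ι E : Type*} [Fintype ι] [AddCommGroup E]
    [Module ℝ E] [TopologicalSpace E] [IsTopologicalAddGroup E] [ContinuousSMul ℝ E] (v : ι → E)
    (h : (0 : E) ∈ interior (convexHull ℝ (Set.range v))) :
    ∃ t : ι → ℝ, (∀ i, 0 < t i) ∧ ∑ i, t i • v i = 0 := by
  classical
  have hsub : convexHull ℝ (Set.range v) ⊆
      Fintype.linearCombination ℝ v '' Set.Ici (0 : ι → ℝ) := by
    apply convexHull_min
    · rintro _ ⟨i, rfl⟩
      exact ⟨Pi.single i 1, Pi.single_nonneg.2 zero_le_one, by simp⟩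
    · exact (convex_Ici (0 : ι → ℝ)).linear_image _
  have hcont : Filter.Tendsto (fun ε : ℝ => -(ε • ∑ i, v i)) (nhds 0) (nhds 0) := by
    have : Continuous (fun ε : ℝ => -(ε • ∑ i, v i)) := by fun_prop
    simpa using this.tendsto 0
  have hev := (hcont.eventually (mem_interior_iff_mem_nhds.1 h)).filter_mono
    (nhdsWithin_le_nhds (s := Set.Ioi 0))
  obtain ⟨ε, hε, hpos⟩ := (hev.and self_mem_nhdsWithin).exists
  obtain ⟨w, hw, hwe⟩ := hsub hε
  have hpos' : 0 < ε := hpos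
  refine ⟨fun i => w i + ε, fun i => add_pos_of_nonneg_of_pos (hw i) hpos', ?_⟩
  rw [Fintype.linearCombination_apply] at hwe
  simp [add_smul, Finset.sum_add_distrib, hwe, Finset.smul_sum]

/-- A vector orthogonal to the kernel of `a ↦ ∑ a i • y i` lies in the range of the transpose. -/
theorem exists_eq_sum_mul_of_orthogonal_ker {n e : ℕ} (y : Fin n → Fin e → ℝ) (c : Fin n → ℝ)
    (h : ∀ a ∈ LinearMap.ker (Fintype.linearCombination ℝ y), ∑ i, c i * a i = 0) :
    ∃ u : Fin e → ℝ, ∀ i, c i = ∑ j, u j * y i j := by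
  classical
  have hmem : Fintype.linearCombination ℝ c ∈
      (LinearMap.ker (Fintype.linearCombination ℝ y)).dualAnnihilator := by
    rw [Submodule.mem_dualAnnihilator]
    intro a ha
    rw [Fintype.linearCombination_apply, ← h a ha]
    exact Finset.sum_congr rfl fun i _ => by simp [mul_comm]
  rw [← LinearMap.range_dualMap_eq_dualAnnihilator_ker] at hmem
  obtain ⟨g, hg⟩ := hmem
  refine ⟨fun j => g (Pi.single j 1), fun i => ?_⟩
  have hi := LinearMap.congr_fun hg (Pi.single i 1)
  simp only [LinearMap.dualMap_apply, Fintype.linearCombination_apply_single, one_smul] at hi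
  rw [← hi, LinearMap.pi_apply_eq_sum_univ g]
  refine Finset.sum_congr rfl fun j _ => ?_
  rw [smul_eq_mul, mul_comm]
  congr 2
  ext k
  simp [Pi.single_apply, eq_comm]

/-- A nonzero vector of a `(d + 1)`-dimensional space is completed to a basis by `d` vectors spanning
a complement of its line. -/
theorem exists_completion {d : ℕ} {V : Type*} [AddCommGroup V] [Module ℝ V] [FiniteDimensional ℝ V]
    (hV : Module.finrank ℝ V = d + 1) (v : V) (hv0 : v ≠ 0) :
    ∃ b : Fin d → V,
      (∀ (r : ℝ) (β : Fin d → ℝ), ∑ j, β j • b j = r • v → β = 0) ∧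
      (∀ a, ∃ (r : ℝ) (β : Fin d → ℝ), a = r • v + ∑ j, β j • b j) := by
  obtain ⟨K', hK'⟩ := Submodule.exists_isCompl (Submodule.span ℝ {v})
  have hdim : Module.finrank ℝ K' = d := by
    have := Submodule.finrank_add_eq_of_isCompl hK'
    rw [finrank_span_singleton hv0, hV] at this
    omega
  let B := Module.finBasisOfFinrankEq ℝ K' hdim
  refine ⟨fun j => (B j : V), fun r β hβ => ?_, fun a => ?_⟩
  · have h1 : ((∑ j, β j • B j : K') : V) = r • v := by
      simpa using hβ
    have h2 : ((∑ j, β j • B j : K') : V) = 0 :=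
      Submodule.disjoint_def.1 hK'.disjoint _
        (h1 ▸ Submodule.smul_mem _ r (Submodule.mem_span_singleton_self v)) (Subtype.mem _)
    have h3 : ∑ j, β j • B j = 0 := Subtype.ext h2
    exact funext (Fintype.linearIndependent_iff.1 B.linearIndependent β h3)
  · have htop : a ∈ Submodule.span ℝ {v} ⊔ K' := by
      rw [hK'.sup_eq_top]; trivial
    obtain ⟨p, hp, q, hq, rfl⟩ := Submodule.mem_sup.1 htop
    obtain ⟨r, rfl⟩ := Submodule.mem_span_singleton.1 hp
    refine ⟨r, B.repr ⟨q, hq⟩, ?_⟩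
    have hq' := congrArg (fun z : K' => (z : V)) (B.sum_repr ⟨q, hq⟩)
    simp only [Submodule.coe_sum, Submodule.coe_smul] at hq'
    rw [hq']

/-- if `d ≥ 1`, `n ≥ d + 2`, and `ȳ 1, …, ȳ n ∈ ℝ^(n-d-1)` are vectors each of
Euclidean norm `1` or zero, which linearly span `ℝ^(n-d-1)` and whose convex hull contains
`0` in its interior, then `ȳ` is a Gale diagram of some `n`-point set `x` in `ℝ^d`: there
are points `x 1, …, x n` affinely spanning `ℝ^d` with a Gale transform `y` whose vectors are
positive multiples of the `ȳ i`. -/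
theorem gale_diagram_realization (d n : ℕ) (hd : 1 ≤ d) (hn : d + 2 ≤ n)
    (ybar : Fin n → Fin (n - d - 1) → ℝ)
    (hnorm : ∀ i, (∑ j, ybar i j ^ 2 = 1) ∨ ybar i = 0)
    (hspan : Submodule.span ℝ (Set.range ybar) = ⊤)
    (hint : (0 : Fin (n - d - 1) → ℝ) ∈ interior (convexHull ℝ (Set.range ybar))) :
    ∃ (x : Fin n → Fin d → ℝ) (y : Fin n → Fin (n - d - 1) → ℝ) (t : Fin n → ℝ),
      affineSpan ℝ (Set.range x) = ⊤ ∧ IsGaleTransform d n x y ∧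
      (∀ i, 0 < t i) ∧ ∀ i, y i = t i • ybar i := by
  obtain ⟨t, ht, hsum⟩ := exists_pos_sum_smul_eq_zero ybar hint
  set y : Fin n → Fin (n - d - 1) → ℝ := fun i => t i • ybar i with hy
  set L := Fintype.linearCombination ℝ y with hL
  have hyspan : LinearMap.range L = ⊤ := by
    rw [hL, Fintype.range_linearCombination, eq_top_iff, ← hspan, Submodule.span_le]
    rintro _ ⟨i, rfl⟩
    have : ybar i = (t i)⁻¹ • y i := by simp [hy, smul_smul, (ht i).ne']
    rw [this]
    exact Submodule.smul_mem _ _ (Submodule.subset_span ⟨i, rfl⟩)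
  have hK : Module.finrank ℝ (LinearMap.ker L) = d + 1 := by
    have := LinearMap.finrank_range_add_finrank_ker L
    rw [hyspan, finrank_top] at this
    simp at this
    omega
  have hone : (1 : Fin n → ℝ) ∈ LinearMap.ker L := by
    simpa [hL, Fintype.linearCombination_apply] using hsum
  let i₀ : Fin n := ⟨0, by omega⟩
  have hone0 : (1 : Fin n → ℝ) ≠ 0 := fun h => one_ne_zero (congrFun h i₀)
  obtain ⟨b', hbind', hbspan'⟩ := exists_completion hK ⟨1, hone⟩
    (fun h => hone0 (congrArg Subtype.val h))
  obtain ⟨b, hbK, hbind, hbspan⟩ : ∃ b : Fin d → Fin n → ℝ, (∀ j, b j ∈ LinearMap.ker L) ∧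
      (∀ (r : ℝ) (β : Fin d → ℝ), ∑ j, β j • b j = r • (1 : Fin n → ℝ) → β = 0) ∧
      (∀ a ∈ LinearMap.ker L, ∃ (r : ℝ) (β : Fin d → ℝ),
        a = r • (1 : Fin n → ℝ) + ∑ j, β j • b j) := by
    refine ⟨fun j => (b' j : Fin n → ℝ), fun j => (b' j).2, fun r β h => ?_, fun a ha => ?_⟩
    · refine hbind' r β (Subtype.ext ?_)
      simpa only [Submodule.coe_sum, Submodule.coe_smul] using h
    · obtain ⟨r, β, h⟩ := hbspan' ⟨a, ha⟩
      refine ⟨r, β, ?_⟩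
      simpa only [Submodule.coe_add, Submodule.coe_sum, Submodule.coe_smul] using
        congrArg Subtype.val h
  refine ⟨fun i j => b j i, y, t, ?_, ?_, ht, fun i => rfl⟩
  · have hnonempty : (affineSpan ℝ (Set.range fun i j => b j i) :
        Set (Fin d → ℝ)).Nonempty := ⟨_, mem_affineSpan ℝ ⟨i₀, rfl⟩⟩
    rw [← AffineSubspace.direction_eq_top_iff_of_nonempty hnonempty]
    by_contra hne
    obtain ⟨f, hf0, hf⟩ := Submodule.exists_le_ker_of_lt_top _ (lt_top_iff_ne_top.2 hne)
    -- the functional `f` is constant on the points, so its coefficients give a relation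
    have hconst : ∀ i, f (fun j => b j i) = f (fun j => b j i₀) := fun i => by
      have := hf (AffineSubspace.vsub_mem_direction
        (mem_affineSpan ℝ (Set.mem_range_self (f := fun i j => b j i) i))
        (mem_affineSpan ℝ (Set.mem_range_self (f := fun i j => b j i) i₀)))
      rw [LinearMap.mem_ker, vsub_eq_sub, map_sub, sub_eq_zero] at this
      exact this
    have hβ := hbind (f fun j => b j i₀) (fun j => f fun k => if j = k then 1 else 0) (by
      ext i
      have := hconst i
      rw [LinearMap.pi_apply_eq_sum_univ f (fun j => b j i)] at this
      simpa [mul_comm] using this)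
    apply hf0
    ext z
    rw [LinearMap.coe_comp, Function.comp_apply, LinearMap.pi_apply_eq_sum_univ f]
    simp [fun j => congrFun hβ j]
  · intro c
    constructor
    · rintro ⟨h0, hx⟩
      refine exists_eq_sum_mul_of_orthogonal_ker y c fun a ha => ?_
      obtain ⟨r, β, rfl⟩ := hbspan a ha
      have hxj : ∀ j, ∑ i, c i * b j i = 0 := fun j => by simpa using congrFun hx j
      calc ∑ i, c i * (r • (1 : Fin n → ℝ) + ∑ j, β j • b j) i
          = r * ∑ i, c i + ∑ j, β j * ∑ i, c i * b j i := by
            simp only [Pi.add_apply, Pi.smul_apply, Finset.sum_apply, Pi.one_apply, smul_eq_mul,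
              mul_add, Finset.sum_add_distrib, Finset.mul_sum]
            rw [Finset.sum_comm (s := Finset.univ (α := Fin d))]
            congr 1
            · exact Finset.sum_congr rfl fun i _ => by ring
            · exact Finset.sum_congr rfl fun i _ => Finset.sum_congr rfl fun j _ => by ring
        _ = 0 := by simp [h0, hxj]
    · rintro ⟨u, hu⟩
      have key : ∀ a ∈ LinearMap.ker L, ∑ i, c i * a i = 0 := fun a ha => by
        have haj : ∀ j, ∑ i, a i * y i j = 0 := fun j => by
          simpa [hL, Fintype.linearCombination_apply] using congrFun (LinearMap.mem_ker.1 ha) j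
        calc ∑ i, c i * a i = ∑ j, u j * ∑ i, a i * y i j := by
              simp only [hu, Finset.sum_mul, Finset.mul_sum]
              rw [Finset.sum_comm]
              exact Finset.sum_congr rfl fun i _ => Finset.sum_congr rfl fun j _ => by ring
          _ = 0 := by simp [haj]
      refine ⟨by simpa using key 1 hone, ?_⟩
      ext j
      simpa using key _ (hbK j)
end

section
/- Let n ≥ d + 2, let x_1, …, x_n ∈ ℝ^d be pairwise distinct points whose affine hull is all of ℝ^d, let (y_1,…,y_n) be a Gale transform of (x_1,…,x_n), and let h : {1,…,n} → ℝ be a height function such that the induced regular subdivision is a triangulation, i.e. for every linear functional φ on ℝ^d × ℝ with φ(0,1) > 0, the points {x_i : i ∈ argmin}, where argmin = {i : φ(x_i, h_i) ≤ φ(x_j, h_j) for all j}, are affinely independent. Then for every nonempty J ⊆ {1,…,n} the following are equivalent: (A) the points {x_i : i ∈ J} span a cell of the regular triangulation T(X,h), i.e. there exists a linear functional φ on ℝ^d × ℝ with φ(0,1) > 0 and J = {i : φ(x_i, h_i) = min_j φ(x_j, h_j)}; (B) the vector β(h) = Σ_{i=1}^n h_i y_i belongs to the convex cone {Σ_{j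 ∉ J} λ_j y_j : λ_j ≥ 0 for all j ∉ J} generated by the Gale vectors indexed by the complement of J. -/
/-- `J` is a cell of the regular subdivision of `x 1, …, x n` induced by the height function
`h`: there is a linear functional `φ` on `ℝ^d × ℝ` with `φ(0,1) > 0` such that `J` is
exactly the set of indices at which `φ(x i, h i)` attains its minimum. -/
def IsCell (d n : ℕ) (x : Fin n → Fin d → ℝ) (h : Fin n → ℝ) (J : Finset (Fin n)) : Prop :=
  ∃ φ : ((Fin d → ℝ) × ℝ) →ₗ[ℝ] ℝ, 0 < φ (0, 1) ∧
    ∀ i : Fin n, i ∈ J ↔ ∀ j : Fin n, φ (x i, h i) ≤ φ (x j, h j)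

/-- A weight `w` that annihilates every affine dependence of `x` is the restriction of an affine
function. This is the duality `range (Lᵀ) = (ker L)^⊥` for `L c = (∑ c i • x i, ∑ c i)`. -/
lemma exists_affine_of_annihilates {ι : Type*} [Fintype ι] {d : ℕ} (x : ι → Fin d → ℝ)
    (w : ι → ℝ)
    (hw : ∀ c : ι → ℝ, ∑ i, c i = 0 → ∑ i, c i • x i = 0 → ∑ i, c i * w i = 0) :
    ∃ (a : (Fin d → ℝ) →ₗ[ℝ] ℝ) (b : ℝ), ∀ i, w i = a (x i) + b := by
  classical
  let L : (ι → ℝ) →ₗ[ℝ] (Fin d → ℝ) × ℝ := Fintype.linearCombination ℝ (fun i => (x i, (1 : ℝ)))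
  let W : Module.Dual ℝ (ι → ℝ) := Fintype.linearCombination ℝ w
  have hL : ∀ c, L c = (∑ i, c i • x i, ∑ i, c i) := by
    intro c
    simp [L, Fintype.linearCombination_apply, Prod.ext_iff, Prod.fst_sum, Prod.snd_sum]
  have hW : W ∈ LinearMap.range L.dualMap := by
    rw [LinearMap.range_dualMap_eq_dualAnnihilator_ker, Submodule.mem_dualAnnihilator]
    intro c hc
    rw [LinearMap.mem_ker, hL, Prod.mk_eq_zero] at hc
    simpa [W, Fintype.linearCombination_apply] using hw c hc.2 hc.1
  obtain ⟨g, hg⟩ := hW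
  refine ⟨g ∘ₗ LinearMap.inl ℝ _ _, g (0, 1), fun i => ?_⟩
  have h1 := LinearMap.congr_fun hg (Pi.single i 1)
  simp only [LinearMap.dualMap_apply, L, W, Fintype.linearCombination_apply_single,
    one_smul] at h1
  rw [← h1, LinearMap.comp_apply, LinearMap.inl_apply, ← map_add]
  simp

/-- Affine functions are annihilated by the Gale vectors: the coordinates of `y` in any direction
`u` form an affine dependence of `x`. -/
lemma IsGaleTransform.sum_affine_smul {d n : ℕ} {x : Fin n → Fin d → ℝ}
    {y : Fin n → Fin (n - d - 1) → ℝ} (hy : IsGaleTransform d n x y)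
    (a : (Fin d → ℝ) →ₗ[ℝ] ℝ) (b : ℝ) : ∑ i, (a (x i) + b) • y i = 0 := by
  funext k
  obtain ⟨h0, h1⟩ := (hy (fun i => y i k)).2 ⟨Pi.single k 1, by simp [Pi.single_apply]⟩
  have h2 := congrArg a h1
  simp only [map_sum, map_smul, smul_eq_mul, map_zero] at h2
  simp only [Finset.sum_apply, Pi.smul_apply, smul_eq_mul, Pi.zero_apply, add_mul,
    Finset.sum_add_distrib, ← Finset.mul_sum, h0, mul_zero, add_zero]
  simpa only [mul_comm] using h2

/-- Conversely to `IsGaleTransform.sum_affine_smul`, every linear relation among the Gale vectors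
is given by the values of an affine function. -/
lemma IsGaleTransform.exists_affine {d n : ℕ} {x : Fin n → Fin d → ℝ}
    {y : Fin n → Fin (n - d - 1) → ℝ} (hy : IsGaleTransform d n x y) (w : Fin n → ℝ)
    (hw : ∑ i, w i • y i = 0) :
    ∃ (a : (Fin d → ℝ) →ₗ[ℝ] ℝ) (b : ℝ), ∀ i, w i = a (x i) + b := by
  refine exists_affine_of_annihilates x w fun c hc0 hc1 => ?_
  obtain ⟨u, hu⟩ := (hy c).1 ⟨hc0, hc1⟩
  have hk : ∀ k, ∑ i, w i * y i k = 0 := fun k => by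
    simpa [Finset.sum_apply] using congrFun hw k
  calc ∑ i, c i * w i = ∑ i, ∑ k, u k * (w i * y i k) := by
        refine Finset.sum_congr rfl fun i _ => ?_
        rw [hu i, Finset.sum_mul]
        exact Finset.sum_congr rfl fun k _ => by ring
    _ = 0 := by
        rw [Finset.sum_comm]
        simp only [← Finset.mul_sum, hk, mul_zero, Finset.sum_const_zero]

/-- Every function on an affinely independent finite family extends to an affine function. -/
lemma AffineIndependent.exists_affine_eq {ι : Type*} [Fintype ι] {d : ℕ} {x : ι → Fin d → ℝ}
    (hx : AffineIndependent ℝ x) (w : ι → ℝ) :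
    ∃ (a : (Fin d → ℝ) →ₗ[ℝ] ℝ) (b : ℝ), ∀ i, w i = a (x i) + b := by
  refine exists_affine_of_annihilates x w fun c hc0 hc1 => ?_
  have := affineIndependent_iff.1 hx Finset.univ c hc0 hc1
  exact Finset.sum_eq_zero fun i hi => by rw [this i hi, zero_mul]

/-- Strict positivity of finitely many numbers survives a small enough perturbation. -/
lemma exists_pos_forall_add_mul_pos {ι : Type*} [Finite ι] (f g : ι → ℝ) :
    ∃ ε : ℝ, 0 < ε ∧ ∀ i, 0 < f i → 0 < f i + ε * g i := by
  have key : ∀ᶠ ε in nhdsWithin (0 : ℝ) (Set.Ioi 0), ∀ i, 0 < f i → 0 < f i + ε * g i := by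
    refine Filter.eventually_all.2 fun i => ?_
    by_cases hi : 0 < f i
    · have hc : Filter.Tendsto (fun ε : ℝ => f i + ε * g i) (nhds 0) (nhds (f i + 0 * g i)) :=
        Continuous.tendsto (by fun_prop) 0
      rw [zero_mul, add_zero] at hc
      filter_upwards [nhdsWithin_le_nhds (hc.eventually (lt_mem_nhds hi))] with ε hε _ using hε
    · exact Filter.Eventually.of_forall fun _ h => absurd h hi
  obtain ⟨ε, h1, h2⟩ := (key.and self_mem_nhdsWithin).exists
  exact ⟨ε, h2, h1⟩

/-- A nonempty `J` is a cell as soon as some modification of the heights by an affine function is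
nonnegative with zero set exactly `J`. -/
lemma isCell_of_affine {d n : ℕ} {x : Fin n → Fin d → ℝ} {h : Fin n → ℝ} {J : Finset (Fin n)}
    (hJ : J.Nonempty) (a : (Fin d → ℝ) →ₗ[ℝ] ℝ) (b : ℝ)
    (h0 : ∀ i ∈ J, h i + (a (x i) + b) = 0) (h1 : ∀ i ∉ J, 0 < h i + (a (x i) + b)) :
    IsCell d n x h J := by
  refine ⟨a.coprod LinearMap.id, by simp, fun i => ?_⟩
  simp only [LinearMap.coprod_apply, LinearMap.id_apply]
  constructor
  · intro hi j
    have := h0 i hi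
    by_cases hj : j ∈ J
    · linarith [h0 j hj]
    · linarith [h1 j hj]
  · intro hi
    by_contra hiJ
    obtain ⟨j, hj⟩ := hJ
    linarith [h0 j hj, h1 i hiJ, hi j]

/-- let `y` be a Gale transform of `x` and `h` a height function whose regular
subdivision is a triangulation (every cell is affinely independent). Then a nonempty `J`
spans a cell of the regular triangulation `T(X, h)` iff `β(h) = ∑ i, h i • y i` lies in the
convex cone generated by the Gale vectors indexed by the complement of `J`. -/
theorem gale_transform_triangulation (d n : ℕ) (hn : d + 2 ≤ n)
    (x : Fin n → Fin d → ℝ) (hinj : Function.Injective x)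
    (hspan : affineSpan ℝ (Set.range x) = ⊤)
    (y : Fin n → Fin (n - d - 1) → ℝ) (hy : IsGaleTransform d n x y)
    (h : Fin n → ℝ)
    (htri : ∀ φ : ((Fin d → ℝ) × ℝ) →ₗ[ℝ] ℝ, 0 < φ (0, 1) →
      AffineIndependent ℝ
        (fun i : {i : Fin n // ∀ j : Fin n, φ (x i, h i) ≤ φ (x j, h j)} => x i.1))
    (J : Finset (Fin n)) (hJ : J.Nonempty) :
    IsCell d n x h J ↔
      ∃ lam : Fin n → ℝ, (∀ j, 0 ≤ lam j) ∧
        ∑ j ∈ Jᶜ, lam j • y j = ∑ i, h i • y i := by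
  classical
  constructor
  · rintro ⟨φ, hφ, hcell⟩
    obtain ⟨i₀, hi₀⟩ := hJ
    have hmin := (hcell i₀).1 hi₀
    have hφa : ∀ v t, φ (v, t) = φ (v, 0) + t * φ (0, 1) := fun v t => by
      rw [← smul_eq_mul, ← map_smul, ← map_add]
      simp
    let lam : Fin n → ℝ := fun i => (φ (x i, h i) - φ (x i₀, h i₀)) / φ (0, 1)
    have hlam : ∀ i, lam i = h i + (((φ (0, 1))⁻¹ • (φ ∘ₗ LinearMap.inl ℝ _ _)) (x i) +
        -(φ (x i₀, h i₀) / φ (0, 1))) := fun i => by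
      simp only [lam, LinearMap.smul_apply, LinearMap.comp_apply, LinearMap.inl_apply,
        smul_eq_mul]
      rw [hφa (x i) (h i)]
      field_simp
      ring
    refine ⟨lam, fun j => div_nonneg (sub_nonneg.2 (hmin j)) hφ.le, ?_⟩
    have hJ0 : ∀ i ∈ J, lam i = 0 := fun i hi => by
      simp [lam, le_antisymm ((hcell i).1 hi i₀) (hmin i)]
    have hsum : ∑ j ∈ Jᶜ, lam j • y j = ∑ j, lam j • y j := by
      refine Finset.sum_subset (Finset.subset_univ _) fun i _ hi => ?_
      rw [hJ0 i (by simpa using hi), zero_smul]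
    rw [hsum]
    simp_rw [hlam, add_smul (h _), Finset.sum_add_distrib]
    rw [hy.sum_affine_smul, add_zero]
  · rintro ⟨lam, hlam, hsum⟩
    let μ : Fin n → ℝ := fun i => if i ∈ J then 0 else lam i
    have hμ0 : ∀ i, 0 ≤ μ i := fun i => by
      simp only [μ]
      split_ifs
      exacts [le_rfl, hlam i]
    have hμJ : ∀ i ∈ J, μ i = 0 := fun i hi => if_pos hi
    have hμsum : ∑ i, μ i • y i = ∑ i, h i • y i := by
      rw [← hsum, ← Finset.sum_subset (Finset.subset_univ Jᶜ)]
      · exact Finset.sum_congr rfl fun i hi => by simp [μ, Finset.mem_compl.1 hi]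
      · intro i _ hi
        rw [hμJ i (by simpa using hi), zero_smul]
    obtain ⟨a, b, hab⟩ := hy.exists_affine (fun i => μ i - h i) (by
      simp_rw [sub_smul, Finset.sum_sub_distrib, hμsum, sub_self])
    -- The zero set of `μ` lies in the cell of `φ (v, t) = a v + t`, hence is affinely independent.
    have hind := htri (a.coprod LinearMap.id) (by simp)
    obtain ⟨a', b', hab'⟩ := hind.exists_affine_eq (fun i => if i.1 ∈ J then (0 : ℝ) else 1)
    have hg : ∀ i, μ i = 0 → a' (x i) + b' = if i ∈ J then (0 : ℝ) else 1 := fun i hi =>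
      (hab' ⟨i, fun j => by
        simp only [LinearMap.coprod_apply, LinearMap.id_apply]
        linarith [hab i, hab j, hμ0 j]⟩).symm
    obtain ⟨ε, hε, hpos⟩ := exists_pos_forall_add_mul_pos μ (fun i => a' (x i) + b')
    have hval : ∀ i, h i + ((a + ε • a') (x i) + (b + ε * b')) =
        μ i + ε * (a' (x i) + b') := fun i => by
      simp only [LinearMap.add_apply, LinearMap.smul_apply, smul_eq_mul]
      linarith [hab i]
    refine isCell_of_affine hJ (a + ε • a') (b + ε * b') (fun i hi => ?_) (fun i hi => ?_)
    · rw [hval, hg i (hμJ i hi), if_pos hi, hμJ i hi, mul_zero, add_zero]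
    · rw [hval]
      rcases (hμ0 i).lt_or_eq with hi' | hi'
      · exact hpos i hi'
      · rw [hg i hi'.symm, if_neg hi, ← hi']
        linarith
end
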